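/- Let ℓ be an odd prime different from char(K) and suppose ζ_ℓ ∉ K. If ζ_ℓ ∉ Γ, then [K(Γ):K] = |Γ_ℓ : K^×| · [K(W_ℓ):K]. -/

import Mathlib

noncomputable section

open IntermediateField

/-- `K^×` viewed as a subgroup of the units of the algebraic closure of `K`. -/
def baseUnits (K : Type*) [Field K] : Subgroup (AlgebraicClosure K)ˣ :=
  (Units.map (algebraMap K (AlgebraicClosure K)).toMonoidHom).range

/-- The subgroup of `(AlgebraicClosure K)ˣ` of elements whose `m`-th power lies in `K^×`. -/
def radGroup (K : Type*) [Field K] (m : ℕ) : Subgroup (AlgebraicClosure K)ˣ where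
  carrier := {x | ∃ y : K, algebraMap K (AlgebraicClosure K) y = (x : AlgebraicClosure K) ^ m}
  one_mem' := ⟨1, by simp⟩
  mul_mem' := by
    rintro a b ⟨y, hy⟩ ⟨z, hz⟩
    exact ⟨y * z, by rw [map_mul, hy, hz, Units.val_mul, mul_pow]⟩
  inv_mem' := by
    rintro a ⟨y, hy⟩
    refine ⟨y⁻¹, ?_⟩
    rw [map_inv₀, hy, Units.val_inv_eq_inv_val, inv_pow]

lemma radGroup_le (K : Type*) [Field K] {m k : ℕ} :
    radGroup K m ≤ radGroup K (m * k) := by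
  rintro x ⟨y, hy⟩
  exact ⟨y ^ k, by rw [map_pow, hy, ← pow_mul]⟩

/-- The group `√[ℓ^∞]{K^×}` of radicals of `ℓ`-power order over `K`. -/
def radInf (K : Type*) [Field K] (ℓ : ℕ) : Subgroup (AlgebraicClosure K)ˣ where
  carrier := {x | ∃ n : ℕ, x ∈ radGroup K (ℓ ^ n)}
  one_mem' := ⟨0, one_mem _⟩
  mul_mem' := by
    rintro a b ⟨n, ha⟩ ⟨m, hb⟩
    refine ⟨n + m, mul_mem ?_ ?_⟩
    · have h : radGroup K (ℓ ^ n) ≤ radGroup K (ℓ ^ (n + m)) := by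
        rw [pow_add]; exact radGroup_le K
      exact h ha
    · have h : radGroup K (ℓ ^ m) ≤ radGroup K (ℓ ^ (n + m)) := by
        rw [add_comm, pow_add]; exact radGroup_le K
      exact h hb
  inv_mem' := by
    rintro a ⟨n, ha⟩
    exact ⟨n, inv_mem ha⟩

/-- The units of the algebraic closure lying in an intermediate field `F`, as a subgroup. -/
def unitsIn {K : Type*} [Field K] (F : IntermediateField K (AlgebraicClosure K)) :
    Subgroup (AlgebraicClosure K)ˣ where
  carrier := {x | (x : AlgebraicClosure K) ∈ F}
  one_mem' := by
    show ((1 : (AlgebraicClosure K)ˣ) : AlgebraicClosure K) ∈ F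
    simpa using one_mem F
  mul_mem' := by
    intro a b ha hb
    show ((a * b : (AlgebraicClosure K)ˣ) : AlgebraicClosure K) ∈ F
    rw [Units.val_mul]
    exact mul_mem ha hb
  inv_mem' := by
    intro x hx
    show ((x⁻¹ : (AlgebraicClosure K)ˣ) : AlgebraicClosure K) ∈ F
    rw [Units.val_inv_eq_inv_val]
    exact inv_mem hx

/-- `K(ζ_{2𝒫})`: the extension of `K` generated by all roots of unity whose order is `4` or
an odd prime, and not divisible by the characteristic of `K`. -/
def cyclo2P (K : Type*) [Field K] : IntermediateField K (AlgebraicClosure K) :=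
  IntermediateField.adjoin K
    {x : AlgebraicClosure K |
      ∃ n : ℕ, (n = 4 ∨ (n.Prime ∧ Odd n)) ∧ ¬ (ringChar K ∣ n) ∧ IsPrimitiveRoot x n}

/-- The set of roots of unity of order exactly `n` in the algebraic closure of `K`. -/
def primRoots (K : Type*) [Field K] (n : ℕ) : Set (AlgebraicClosure K) :=
  {x | IsPrimitiveRoot x n}

/-- The set of roots of unity of order `ℓ^n` for `n ≤ t` (all of them if `t = ∞`). -/
def pPowRoots (K : Type*) [Field K] (ℓ : ℕ) (t : ℕ∞) : Set (AlgebraicClosure K) :=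
  {x | ∃ n : ℕ, (n : ℕ∞) ≤ t ∧ IsPrimitiveRoot x (ℓ ^ n)}

/-- The set of units that are roots of unity of order `ℓ^n` for `n ≤ t`. -/
def pPowRootsUnits (K : Type*) [Field K] (ℓ : ℕ) (t : ℕ∞) : Set (AlgebraicClosure K)ˣ :=
  {x | ∃ n : ℕ, (n : ℕ∞) ≤ t ∧ IsPrimitiveRoot (x : AlgebraicClosure K) (ℓ ^ n)}

section helpers

open Polynomial

lemma aux_root {E : Type*} [Field E] {ℓ : ℕ} (hℓ : ℓ.Prime) {ζ x c : E} (hζ : IsPrimitiveRoot ζ ℓ)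
    (hc : c ≠ 0) (h : x ^ ℓ = c ^ ℓ) : ∃ i : ℕ, x = c * ζ ^ i := by
  have : NeZero ℓ := ⟨hℓ.ne_zero⟩
  have h1 : (x / c) ^ ℓ = 1 := by rw [div_pow, h, div_self (pow_ne_zero _ hc)]
  obtain ⟨i, -, hi⟩ := hζ.eq_pow_of_pow_eq_one h1
  exact ⟨i, by rw [hi]; field_simp⟩

lemma aux_deg {F E : Type*} [Field F] [Field E] [Algebra F E] {ℓ : ℕ} (hℓ : ℓ.Prime)
    (hodd : ℓ ≠ 2) {ζ : F} (hζ : IsPrimitiveRoot ζ ℓ) {y : E} (k : ℕ)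
    (hy0 : y ≠ 0)
    (h1 : y ^ ℓ ^ (k + 1) ∈ Set.range (algebraMap F E))
    (h2 : y ^ ℓ ^ k ∉ Set.range (algebraMap F E)) :
    Module.finrank F F⟮y⟯ = ℓ ^ (k + 1) := by
  obtain ⟨a, ha⟩ := h1
  have hirr : Irreducible (X ^ (ℓ ^ (k + 1)) - C a : F[X]) := by
    apply X_pow_sub_C_irreducible_of_prime_pow hℓ hodd
    rintro b rfl
    apply h2
    have hb : algebraMap F E b ≠ 0 := by
      intro hb
      rw [map_pow, hb, zero_pow hℓ.ne_zero] at ha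
      exact pow_ne_zero _ hy0 ha.symm
    obtain ⟨i, hi⟩ := aux_root hℓ (hζ.map_of_injective (algebraMap F E).injective)
      (x := y ^ ℓ ^ k) hb (by rw [← pow_mul, ← pow_succ, ← ha, map_pow])
    exact ⟨b * ζ ^ i, by rw [hi]; simp⟩
  have hmonic : (X ^ (ℓ ^ (k + 1)) - C a : F[X]).Monic :=
    monic_X_pow_sub_C a (pow_ne_zero _ hℓ.ne_zero)
  have hint : IsIntegral F y := ⟨_, hmonic, by simp [ha]⟩
  rw [IntermediateField.adjoin.finrank hint,
    ← minpoly.eq_of_irreducible_of_monic hirr (by simp [ha]) hmonic, natDegree_X_pow_sub_C]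

lemma aux_kummer {F E : Type*} [Field F] [Field E] [Algebra F E] {ℓ : ℕ} (hℓ : ℓ.Prime)
    (hodd : ℓ ≠ 2) {ζ : F} (hζ : IsPrimitiveRoot ζ ℓ) {x y : E}
    (hx0 : x ≠ 0) (hy0 : y ≠ 0)
    (hx1 : x ^ ℓ ∈ Set.range (algebraMap F E))
    (hx2 : x ∉ Set.range (algebraMap F E))
    (hy : y ∈ F⟮x⟯) (hy1 : y ^ ℓ ∈ Set.range (algebraMap F E)) :
    ∃ (c : F) (i : ℕ), y = algebraMap F E c * x ^ i := by
  have : NeZero ℓ := ⟨hℓ.ne_zero⟩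
  have hdeg : Module.finrank F F⟮x⟯ = ℓ := by
    simpa using aux_deg hℓ hodd hζ 0 hx0 (by simpa using hx1) (by simpa using hx2)
  have : FiniteDimensional F F⟮x⟯ :=
    FiniteDimensional.of_finrank_pos (by rw [hdeg]; exact hℓ.pos)
  obtain ⟨a, ha⟩ := hx1
  obtain ⟨b, hb⟩ := hy1
  set x' : F⟮x⟯ := ⟨x, IntermediateField.mem_adjoin_simple_self F x⟩ with hx'
  set y' : F⟮x⟯ := ⟨y, hy⟩ with hy'
  have hxa : x' ^ ℓ = algebraMap F F⟮x⟯ a := by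
    apply Subtype.ext; simp [hx', ha]
  have hyb : y' ^ ℓ = algebraMap F F⟮x⟯ b := by
    apply Subtype.ext; simp [hy', hb]
  have hx'0 : x' ≠ 0 := by intro h; exact hx0 (congrArg Subtype.val h)
  have hy'0 : y' ≠ 0 := by intro h; exact hy0 (congrArg Subtype.val h)
  have htop : F⟮x'⟯ = ⊤ := by
    apply IntermediateField.map_injective F⟮x⟯.val
    rw [IntermediateField.adjoin_map, ← AlgHom.fieldRange_eq_map, IntermediateField.fieldRange_val]
    simp [hx']
  have hne : (primitiveRoots (Module.finrank F F⟮x⟯) F).Nonempty := by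
    rw [hdeg]; exact ⟨ζ, (mem_primitiveRoots hℓ.pos).2 hζ⟩
  obtain ⟨hgal, hcyc⟩ := (((isCyclic_tfae F F⟮x⟯ hne).out 0 2 :) : (IsGalois F F⟮x⟯ ∧ IsCyclic Gal(F⟮x⟯/F)) ↔
      ∃ α : F⟮x⟯, α ^ (Module.finrank F F⟮x⟯) ∈ Set.range (algebraMap F F⟮x⟯) ∧ F⟮α⟯ = ⊤).2
    ⟨x', by rw [hdeg, hxa]; exact ⟨a, rfl⟩, htop⟩
  obtain ⟨σ, hσ⟩ := hcyc
  have hfix : ∀ z : F⟮x⟯, σ z = z → z ∈ Set.range (algebraMap F F⟮x⟯) := by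
    intro z hz
    rw [IsGalois.mem_range_algebraMap_iff_fixed]
    intro τ
    have h1 : τ ∈ MulAction.stabilizer (F⟮x⟯ ≃ₐ[F] F⟮x⟯) z := by
      have : Subgroup.zpowers σ ≤ MulAction.stabilizer (F⟮x⟯ ≃ₐ[F] F⟮x⟯) z := by
        rw [Subgroup.zpowers_le]; exact hz
      exact this (hσ τ)
    exact h1
  have hζ' : IsPrimitiveRoot (algebraMap F F⟮x⟯ ζ) ℓ :=
    hζ.map_of_injective (algebraMap F F⟮x⟯).injective
  have hσx : σ x' ≠ x' := by
    intro h
    obtain ⟨c, hc⟩ := hfix _ h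
    exact hx2 ⟨c, congrArg Subtype.val hc⟩
  obtain ⟨i, hi⟩ := aux_root hℓ hζ' (x := σ x') hx'0 (by rw [← map_pow, hxa]; simp)
  have hω : IsPrimitiveRoot (σ x' / x') ℓ := by
    have := Fact.mk hℓ
    rw [← orderOf_eq_prime (x := σ x' / x') (p := ℓ) ?_ ?_]
    · exact IsPrimitiveRoot.orderOf _
    · rw [div_pow, ← map_pow, hxa]
      simp only [AlgEquiv.commutes]
      rw [← hxa, div_self (pow_ne_zero _ hx'0)]
    · intro h
      exact hσx ((div_eq_one_iff_eq hx'0).1 h)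
  obtain ⟨j, hj⟩ := aux_root hℓ hω (x := σ y') hy'0 (by rw [← map_pow, hyb]; simp)
  have hσx0 : σ x' ≠ 0 := by simpa using hx'0
  obtain ⟨c, hc⟩ := hfix (y' / x' ^ j) (by
    rw [map_div₀, map_pow, hj, div_pow]; field_simp)
  refine ⟨c, j, ?_⟩
  have : y' = algebraMap F F⟮x⟯ c * x' ^ j := by rw [hc]; field_simp
  exact congrArg Subtype.val this

lemma aux_kummer' {F E : Type*} [Field F] [Field E] [Algebra F E] {ℓ : ℕ} (hℓ : ℓ.Prime)
    (hodd : ℓ ≠ 2) {ζ : F} (hζ : IsPrimitiveRoot ζ ℓ) {x y : E}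
    (hx0 : x ≠ 0) (hy0 : y ≠ 0)
    (hx1 : x ^ ℓ ∈ Set.range (algebraMap F E))
    (hx2 : x ∉ Set.range (algebraMap F E))
    (hy : y ∈ F⟮x⟯) {n : ℕ} (hy1 : y ^ ℓ ^ n ∈ Set.range (algebraMap F E)) :
    ∃ (c : F) (i : ℕ), y = algebraMap F E c * x ^ i := by
  classical
  have hdeg : Module.finrank F F⟮x⟯ = ℓ := by
    simpa using aux_deg hℓ hodd hζ 0 hx0 (by simpa using hx1) (by simpa using hx2)
  have : FiniteDimensional F F⟮x⟯ :=
    FiniteDimensional.of_finrank_pos (by rw [hdeg]; exact hℓ.pos)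
  have hex : ∃ n, y ^ ℓ ^ n ∈ Set.range (algebraMap F E) := ⟨n, hy1⟩
  have hk := Nat.find_spec hex
  have hmin := fun {m : ℕ} => Nat.find_min hex (m := m)
  generalize Nat.find hex = k at hk hmin
  match k with
  | 0 =>
    obtain ⟨c, hc⟩ := hk
    exact ⟨c, 0, by simpa using hc.symm⟩
  | 1 => exact aux_kummer hℓ hodd hζ hx0 hy0 hx1 hx2 hy (by simpa using hk)
  | k + 2 =>
    exfalso
    have h1 := aux_deg hℓ hodd hζ (k + 1) hy0 hk (hmin (by omega))
    have hle : F⟮y⟯ ≤ F⟮x⟯ := by simpa using hy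
    have h2 := IntermediateField.finrank_le_of_le_right hle
    rw [h1, hdeg] at h2
    have h3 : ℓ ^ 1 < ℓ ^ (k + 1 + 1) := Nat.pow_lt_pow_right hℓ.one_lt (by omega)
    rw [pow_one] at h3
    omega

lemma aux_choose {G : Type*} [CommGroup G] {U : Subgroup G} {ℓ n : ℕ} {x : G} (hx : x ∉ U)
    (h : x ^ ℓ ^ n ∈ U) : ∃ k, x ^ ℓ ^ k ∉ U ∧ (x ^ ℓ ^ k) ^ ℓ ∈ U := by
  induction n with
  | zero => simp at h; exact absurd h hx
  | succ n ih =>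
    by_cases h' : x ^ ℓ ^ n ∈ U
    · exact ih h'
    · exact ⟨n, h', by rwa [← pow_mul, ← pow_succ]⟩

lemma aux_pow_mem {G : Type*} [CommGroup G] {U Γ : Subgroup G} {x : G} (hx : x ∈ Γ) :
    x ^ U.relIndex Γ ∈ U := by
  have := Subgroup.pow_index_mem (U.subgroupOf Γ) ⟨x, hx⟩
  exact this

lemma aux_relIndex_zpowers {G : Type*} [CommGroup G] {U : Subgroup G} {ℓ : ℕ} (hℓ : ℓ.Prime)
    {x : G} (hx : x ∉ U) (hxl : x ^ ℓ ∈ U) : U.relIndex (Subgroup.zpowers x) = ℓ := by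
  have := Fact.mk hℓ
  have h := Subgroup.relIndex_ker (K := Subgroup.zpowers x) (QuotientGroup.mk' U)
  rw [QuotientGroup.ker_mk', MonoidHom.map_zpowers, Nat.card_zpowers] at h
  rw [h]
  apply orderOf_eq_prime
  · rw [← map_pow]; exact (QuotientGroup.eq_one_iff _).2 hxl
  · intro h; exact hx ((QuotientGroup.eq_one_iff _).1 h)

lemma mem_unitsIn {K : Type*} [Field K] (F : IntermediateField K (AlgebraicClosure K))
    (x : (AlgebraicClosure K)ˣ) : x ∈ unitsIn F ↔ (x : AlgebraicClosure K) ∈ F := Iff.rfl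

lemma unitsIn_mono {K : Type*} [Field K] {F F' : IntermediateField K (AlgebraicClosure K)}
    (h : F ≤ F') : unitsIn F ≤ unitsIn F' := fun _ hx => h hx

lemma mem_range_iff {K : Type*} [Field K] (F : IntermediateField K (AlgebraicClosure K))
    (x : AlgebraicClosure K) : x ∈ Set.range (algebraMap F (AlgebraicClosure K)) ↔ x ∈ F := by
  constructor
  · rintro ⟨y, rfl⟩; exact y.2
  · intro h; exact ⟨⟨x, h⟩, rfl⟩

/-- The field generated over `F` by the subgroup `Γ`. -/
def fieldGen {K : Type*} [Field K] (F : IntermediateField K (AlgebraicClosure K))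
    (Γ : Subgroup (AlgebraicClosure K)ˣ) : IntermediateField K (AlgebraicClosure K) :=
  F ⊔ IntermediateField.adjoin K (Units.val '' (Γ : Set (AlgebraicClosure K)ˣ))

/-- The field generated over `F` by one element. -/
def fieldOne {K : Type*} [Field K] (F : IntermediateField K (AlgebraicClosure K))
    (x : AlgebraicClosure K) : IntermediateField K (AlgebraicClosure K) :=
  (F⟮x⟯).restrictScalars K

lemma le_fieldOne {K : Type*} [Field K] (F : IntermediateField K (AlgebraicClosure K))
    (x : AlgebraicClosure K) : F ≤ fieldOne F x := by
  intro y hy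
  exact (F⟮x⟯).algebraMap_mem ⟨y, hy⟩

lemma mem_fieldOne {K : Type*} [Field K] (F : IntermediateField K (AlgebraicClosure K))
    (x : AlgebraicClosure K) : x ∈ fieldOne F x :=
  IntermediateField.mem_adjoin_simple_self F x

lemma relfinrank_fieldOne {K : Type*} [Field K] (F : IntermediateField K (AlgebraicClosure K))
    (x : AlgebraicClosure K) : F.relfinrank (fieldOne F x) = Module.finrank F F⟮x⟯ := by
  rw [IntermediateField.relfinrank_eq_finrank_of_le (le_fieldOne F x)]
  rfl

lemma fieldGen_fieldOne {K : Type*} [Field K] (F : IntermediateField K (AlgebraicClosure K))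
    {Γ : Subgroup (AlgebraicClosure K)ˣ} {x : (AlgebraicClosure K)ˣ} (hx : x ∈ Γ) :
    fieldGen (fieldOne F x) Γ = fieldGen F Γ := by
  have hxG : (x : AlgebraicClosure K) ∈
      IntermediateField.adjoin K (Units.val '' (Γ : Set (AlgebraicClosure K)ˣ)) :=
    IntermediateField.subset_adjoin _ _ ⟨x, hx, rfl⟩
  unfold fieldGen fieldOne
  rw [IntermediateField.restrictScalars_adjoin_eq_sup, sup_assoc]
  congr 1
  exact sup_eq_right.2 (by simpa using hxG)

lemma fieldOne_le_fieldGen {K : Type*} [Field K] (F : IntermediateField K (AlgebraicClosure K))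
    {Γ : Subgroup (AlgebraicClosure K)ˣ} {x : (AlgebraicClosure K)ˣ} (hx : x ∈ Γ) :
    fieldOne F x ≤ fieldGen F Γ := by
  rw [← fieldGen_fieldOne F hx]; exact le_sup_left

lemma relfinrank_fieldOne_le {K : Type*} [Field K] (F : IntermediateField K (AlgebraicClosure K))
    {ℓ : ℕ} (hℓ : ℓ.Prime) {x : AlgebraicClosure K} (hx : x ^ ℓ ∈ F) :
    0 < F.relfinrank (fieldOne F x) ∧ F.relfinrank (fieldOne F x) ≤ ℓ := by
  rw [relfinrank_fieldOne]
  have hm : (X ^ ℓ - C (⟨x ^ ℓ, hx⟩ : F)).Monic := monic_X_pow_sub_C _ hℓ.ne_zero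
  have hr : Polynomial.aeval x (X ^ ℓ - C (⟨x ^ ℓ, hx⟩ : F)) = 0 := by
    simp [IntermediateField.algebraMap_apply]
  have hint : IsIntegral F x := ⟨_, hm, hr⟩
  rw [IntermediateField.adjoin.finrank hint]
  refine ⟨minpoly.natDegree_pos hint, ?_⟩
  have := Polynomial.natDegree_le_of_dvd (minpoly.dvd F x hr) hm.ne_zero
  rwa [natDegree_X_pow_sub_C] at this

lemma upper {K : Type*} [Field K] {ℓ : ℕ} (hℓ : ℓ.Prime) (Γ : Subgroup (AlgebraicClosure K)ˣ)
    (n : ℕ) : ∀ (F : IntermediateField K (AlgebraicClosure K)),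
      (unitsIn F).relIndex Γ = ℓ ^ n →
      0 < F.relfinrank (fieldGen F Γ) ∧ F.relfinrank (fieldGen F Γ) ≤ ℓ ^ n := by
  induction n using Nat.strong_induction_on with
  | _ n ih =>
  intro F hF
  by_cases hle : Γ ≤ unitsIn F
  · have : fieldGen F Γ = F := by
      refine sup_eq_left.2 (IntermediateField.adjoin_le_iff.2 ?_)
      rintro _ ⟨x, hx, rfl⟩
      exact hle hx
    rw [this, IntermediateField.relfinrank_self]
    exact ⟨one_pos, Nat.one_le_pow _ _ hℓ.pos⟩
  · obtain ⟨x, hxΓ, hxF⟩ := Set.not_subset.1 hle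
    obtain ⟨k, h1, h2⟩ := aux_choose hxF (hF ▸ aux_pow_mem hxΓ)
    set z := x ^ ℓ ^ k with hz
    have hzΓ : z ∈ Γ := pow_mem hxΓ _
    clear_value z
    have hmul := Subgroup.relIndex_inf_mul_relIndex (unitsIn F) (unitsIn (fieldOne F z)) Γ
    rw [inf_eq_left.2 (unitsIn_mono (le_fieldOne F z)), hF] at hmul
    obtain ⟨m, hm, hm'⟩ := (Nat.dvd_prime_pow hℓ).1 (Dvd.intro_left _ hmul)
    have hlt : m < n := by
      refine lt_of_le_of_ne hm ?_
      rintro rfl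
      rw [hm'] at hmul
      have : (unitsIn F).relIndex (unitsIn (fieldOne F z) ⊓ Γ) = 1 :=
        Nat.eq_of_mul_eq_mul_right (pow_pos hℓ.pos m) (by rw [hmul, one_mul])
      exact h1 (Subgroup.relIndex_eq_one.1 this ⟨mem_fieldOne F z, hzΓ⟩)
    obtain ⟨h3, h4⟩ := ih m hlt _ hm'
    obtain ⟨h5, h6⟩ := relfinrank_fieldOne_le F hℓ (x := (z : AlgebraicClosure K))
      (by simpa [mem_unitsIn] using h2)
    have h7 := IntermediateField.relfinrank_mul_relfinrank (le_fieldOne F z)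
      (fieldOne_le_fieldGen F hzΓ)
    rw [fieldGen_fieldOne F hzΓ] at h3 h4
    rw [← h7]
    refine ⟨Nat.mul_pos h5 h3, ?_⟩
    calc _ ≤ ℓ * ℓ ^ m := Nat.mul_le_mul h6 h4
      _ = ℓ ^ (m + 1) := by ring
      _ ≤ ℓ ^ n := Nat.pow_le_pow_right hℓ.pos hlt

lemma exact_deg {K : Type*} [Field K] {ℓ : ℕ} (hℓ : ℓ.Prime) (hodd : ℓ ≠ 2)
    (Γ : Subgroup (AlgebraicClosure K)ˣ) {ζ : AlgebraicClosure K} (hζ : IsPrimitiveRoot ζ ℓ)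
    (n : ℕ) : ∀ (F : IntermediateField K (AlgebraicClosure K)), ζ ∈ F →
      (unitsIn F).relIndex Γ = ℓ ^ n → F.relfinrank (fieldGen F Γ) = ℓ ^ n := by
  induction n with
  | zero =>
    intro F _ hF
    have hle : Γ ≤ unitsIn F := Subgroup.relIndex_eq_one.1 (by simpa using hF)
    have : fieldGen F Γ = F := by
      refine sup_eq_left.2 (IntermediateField.adjoin_le_iff.2 ?_)
      rintro _ ⟨x, hx, rfl⟩
      exact hle hx
    rw [this, IntermediateField.relfinrank_self, pow_zero]
  | succ n ih =>
    intro F hζF hF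
    have hζ' : IsPrimitiveRoot (⟨ζ, hζF⟩ : F) ℓ :=
      IsPrimitiveRoot.of_map_of_injective (f := algebraMap F (AlgebraicClosure K)) hζ
        (algebraMap F (AlgebraicClosure K)).injective
    have hle : ¬ Γ ≤ unitsIn F := by
      intro h
      rw [Subgroup.relIndex_eq_one.2 h] at hF
      exact (Nat.one_lt_pow (Nat.succ_ne_zero n) hℓ.one_lt).ne hF
    obtain ⟨x, hxΓ, hxF⟩ := Set.not_subset.1 hle
    obtain ⟨k, h1, h2⟩ := aux_choose hxF (hF ▸ aux_pow_mem hxΓ)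
    set z := x ^ ℓ ^ k with hz
    have hzΓ : z ∈ Γ := pow_mem hxΓ _
    clear_value z
    have hz1 : (z : AlgebraicClosure K) ∉ Set.range (algebraMap F (AlgebraicClosure K)) := by
      rw [mem_range_iff]; exact h1
    have hz2 : (z : AlgebraicClosure K) ^ ℓ ∈ Set.range (algebraMap F (AlgebraicClosure K)) := by
      rw [mem_range_iff]; simpa [mem_unitsIn] using h2
    have hmul := Subgroup.relIndex_inf_mul_relIndex (unitsIn F) (unitsIn (fieldOne F z)) Γ
    rw [inf_eq_left.2 (unitsIn_mono (le_fieldOne F z)), hF] at hmul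
    have hzp := aux_relIndex_zpowers hℓ h1 h2
    have hind : (unitsIn F).relIndex (unitsIn (fieldOne F z) ⊓ Γ) ≤ ℓ := by
      have hsup : (unitsIn F).relIndex (Subgroup.zpowers z ⊔ unitsIn F) = ℓ := by
        rw [Subgroup.relIndex_sup_right, hzp]
      rw [← hsup]
      refine Subgroup.relIndex_le_of_le_right ?_ (by rw [hsup]; exact hℓ.ne_zero)
      rintro y ⟨hy1, hy2⟩
      obtain ⟨c, i, hci⟩ := aux_kummer' (n := n + 1) hℓ hodd hζ' z.ne_zero y.ne_zero hz2 hz1 hy1 (by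
        rw [mem_range_iff]
        have := hF ▸ aux_pow_mem (U := unitsIn F) hy2
        simpa [mem_unitsIn] using this)
      have hyz : y * (z ^ i)⁻¹ ∈ unitsIn F := by
        rw [mem_unitsIn]
        have : ((y * (z ^ i)⁻¹ : (AlgebraicClosure K)ˣ) : AlgebraicClosure K) = c := by
          rw [Units.val_mul, hci, Units.val_inv_eq_inv_val, Units.val_pow_eq_pow_val,
            mul_assoc, mul_inv_cancel₀ (pow_ne_zero _ z.ne_zero), mul_one]
          rfl
        rw [this]; exact c.2
      have : y = z ^ i * (y * (z ^ i)⁻¹) := by rw [mul_comm y, mul_inv_cancel_left]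
      rw [this]
      exact Subgroup.mul_mem_sup (pow_mem (Subgroup.mem_zpowers z) i) hyz
    have hind' : ℓ ≤ (unitsIn F).relIndex (unitsIn (fieldOne F z) ⊓ Γ) := by
      conv_lhs => rw [← hzp]
      refine Subgroup.relIndex_le_of_le_right ?_ ?_
      · rw [Subgroup.zpowers_le]; exact ⟨mem_fieldOne F z, hzΓ⟩
      · intro h0
        rw [h0, zero_mul] at hmul
        exact pow_ne_zero _ hℓ.ne_zero hmul.symm
    rw [le_antisymm hind hind', pow_succ, mul_comm] at hmul
    have h3 := ih (fieldOne F z) (le_fieldOne F z hζF)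
      (Nat.eq_of_mul_eq_mul_right hℓ.pos hmul)
    have h7 := IntermediateField.relfinrank_mul_relfinrank (le_fieldOne F z)
      (fieldOne_le_fieldGen F hzΓ)
    rw [fieldGen_fieldOne F hzΓ] at h3
    have hd : Module.finrank F F⟮(z : AlgebraicClosure K)⟯ = ℓ := by
      simpa using aux_deg hℓ hodd hζ' 0 z.ne_zero (by simpa using hz2) (by simpa using hz1)
    rw [← h7, h3, relfinrank_fieldOne, hd, pow_succ, mul_comm]

lemma relfinrank_sup_le {K E : Type*} [Field K] [Field E] [Algebra K E]
    (L L' M : IntermediateField K E) (h : L ≤ L') (h' : L ≤ M) (hM : 0 < L.relfinrank M) :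
    M.relfinrank (M ⊔ L') ≤ L.relfinrank L' := by
  have h1 := IntermediateField.relfinrank_mul_relfinrank h' (le_sup_left (b := L'))
  have h2 : L.relfinrank (M ⊔ L') ≤ L.relfinrank M * L.relfinrank L' := by
    rw [IntermediateField.relfinrank_eq_finrank_of_le h',
      IntermediateField.relfinrank_eq_finrank_of_le h,
      IntermediateField.relfinrank_eq_finrank_of_le (h'.trans le_sup_left)]
    have := IntermediateField.finrank_sup_le (IntermediateField.extendScalars h')
      (IntermediateField.extendScalars h)
    have he : IntermediateField.extendScalars h' ⊔ IntermediateField.extendScalars h =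
        IntermediateField.extendScalars (h'.trans (le_sup_left (b := L'))) := by
      rw [IntermediateField.extendScalars_sup]
    rwa [he] at this
  rw [← h1] at h2
  exact Nat.le_of_mul_le_mul_left h2 hM

/-- In an abelian extension `M` of `K` without `ζ_ℓ ∈ K`, an `ℓ`-th root of an element of `K` is
an element of `K` times an `ℓ`-th root of unity. -/
lemma abelian_root {K E : Type*} [Field K] [Field E] [Algebra K E]
    {ℓ : ℕ} (hℓ : ℓ.Prime) {ζ : E} (hζ : IsPrimitiveRoot ζ ℓ)
    (hnK : ¬ ∃ z : K, IsPrimitiveRoot z ℓ) (M : IntermediateField K E) [IsAbelianGalois K M]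
    {x : E} (hxM : x ∈ M) {a : K} (ha : algebraMap K E a = x ^ ℓ) :
    ∃ b : K, b ^ ℓ = a := by
  by_contra! hb
  have hirr := X_pow_sub_C_irreducible_of_prime hℓ hb
  have hmonic : (X ^ ℓ - C a : K[X]).Monic := monic_X_pow_sub_C a hℓ.ne_zero
  have hx0 : x ≠ 0 := by
    rintro rfl
    rw [zero_pow hℓ.ne_zero] at ha
    have : a = 0 := by simpa using ha
    exact hb 0 (by rw [this, zero_pow hℓ.ne_zero])
  have hmin := minpoly.eq_of_irreducible_of_monic hirr (x := x) (by simp [ha]) hmonic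
  have hint : IsIntegral K x := ⟨_, hmonic, by simp [ha]⟩
  have hdeg : Module.finrank K K⟮x⟯ = ℓ := by
    rw [IntermediateField.adjoin.finrank hint, ← hmin, natDegree_X_pow_sub_C]
  have hle : K⟮x⟯ ≤ M := by simpa using hxM
  have : IsAbelianGalois K K⟮x⟯ := IsAbelianGalois.of_algHom (IntermediateField.inclusion hle)
  have : FiniteDimensional K K⟮x⟯ := IntermediateField.adjoin.finiteDimensional hint
  -- so `ζ * x` lies in `K⟮x⟯`
  have hζx : ζ * x ∈ K⟮x⟯ := by
    have hn : Normal K K⟮x⟯ := inferInstance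
    have hsp := hn.splits (IntermediateField.AdjoinSimple.gen K x)
    rw [IntermediateField.minpoly_gen, ← hmin] at hsp
    obtain ⟨w, hw⟩ := hsp.mem_range_of_isRoot (i := algebraMap K⟮x⟯ E) (x := ζ * x)
      (Polynomial.map_ne_zero hmonic.ne_zero) (by
        rw [Polynomial.map_map, ← IsScalarTower.algebraMap_eq]
        simp [mul_pow, hζ.pow_eq_one, ha])
    exact hw ▸ w.2
  have hζK : ζ ∈ K⟮x⟯ := by
    have := mul_mem hζx (inv_mem (IntermediateField.mem_adjoin_simple_self K x))
    rwa [mul_assoc, mul_inv_cancel₀ hx0, mul_one] at this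
  have hle2 : K⟮ζ⟯ ≤ K⟮x⟯ := by simpa using hζK
  have hdvd : Module.finrank K K⟮ζ⟯ ∣ ℓ := hdeg ▸ IntermediateField.finrank_dvd_of_le_right hle2
  have hζint : IsIntegral K ζ := hζ.isIntegral hℓ.pos |>.tower_top
  have hlt : Module.finrank K K⟮ζ⟯ < ℓ := by
    rw [IntermediateField.adjoin.finrank hζint]
    have hr : Polynomial.aeval ζ (cyclotomic ℓ K) = 0 := by
      rw [aeval_def, eval₂_eq_eval_map, map_cyclotomic]
      exact hζ.isRoot_cyclotomic hℓ.pos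
    have h1 := Polynomial.natDegree_le_of_dvd (minpoly.dvd K ζ hr) (cyclotomic_ne_zero ℓ K)
    rw [natDegree_cyclotomic, Nat.totient_prime hℓ] at h1
    have := hℓ.pos
    omega
  have hone : Module.finrank K K⟮ζ⟯ = 1 := by
    rcases (Nat.dvd_prime hℓ).1 hdvd with h | h
    · exact h
    · omega
  rw [IntermediateField.finrank_eq_one_iff, IntermediateField.adjoin_simple_eq_bot_iff] at hone
  obtain ⟨z, hz⟩ := IntermediateField.mem_bot.1 hone
  exact hnK ⟨z, IsPrimitiveRoot.of_map_of_injective (f := algebraMap K E) (hz ▸ hζ)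
    (algebraMap K E).injective⟩

end helpers

/-- Theorem 4.3 (first part): let `ℓ` be an odd prime different from `char K` with `ζ_ℓ ∉ K`.
If `ζ_ℓ ∉ Γ`, then `[K(Γ):K] = |Γ_ℓ : K^×| ⬝ [K(W_ℓ):K]`. -/
theorem stmt9 (K : Type*) [Field K] (ℓ : ℕ) (hℓ : ℓ.Prime) (hℓodd : Odd ℓ)
    (hchar : ringChar K ≠ ℓ) (hnK : ¬ ∃ z : K, IsPrimitiveRoot z ℓ)
    (W : Subgroup (AlgebraicClosure K)ˣ)
    (hW : ∃ S : Set (AlgebraicClosure K)ˣ, S.Finite ∧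
      (∀ x ∈ S, ∃ q : ℕ, q.Prime ∧ Odd q ∧ q ≠ ℓ ∧ q ≠ ringChar K ∧
        IsPrimitiveRoot (x : AlgebraicClosure K) q) ∧ W = Subgroup.closure S)
    (Γℓ : Subgroup (AlgebraicClosure K)ˣ) (hΓK : baseUnits K ≤ Γℓ)
    (hidx : ∃ m : ℕ, Subgroup.relIndex (baseUnits K) Γℓ = ℓ ^ m)
    (hnΓ : ∀ x : (AlgebraicClosure K)ˣ, IsPrimitiveRoot (x : AlgebraicClosure K) ℓ →
      x ∉ baseUnits K ⊔ W ⊔ Γℓ) :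
    Module.finrank K (IntermediateField.adjoin K
        (Units.val '' ((baseUnits K ⊔ W ⊔ Γℓ) : Set (AlgebraicClosure K)ˣ))) =
      Subgroup.relIndex (baseUnits K) Γℓ *
        Module.finrank K (IntermediateField.adjoin K
          (Units.val '' (W : Set (AlgebraicClosure K)ˣ))) := by
  obtain ⟨S, hSfin, hS, rfl⟩ := hW
  obtain ⟨m, hm⟩ := hidx
  have hodd : ℓ ≠ 2 := by rintro rfl; exact absurd hℓodd (by decide)
  have hne0 : (ℓ : K) ≠ 0 := by
    intro h
    have hd := ringChar.dvd h
    rcases (Nat.dvd_prime hℓ).1 hd with h1 | h1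
    · exact (CharP.ringChar_ne_one (R := K)) h1
    · exact hchar h1
  have : NeZero (ℓ : K) := ⟨hne0⟩
  obtain ⟨ζ, hζ⟩ := HasEnoughRootsOfUnity.exists_primitiveRoot (AlgebraicClosure K) ℓ
  set T : Set ℕ := insert ℓ ((fun x : (AlgebraicClosure K)ˣ => orderOf (x : AlgebraicClosure K)) '' S)
    with hT
  have hTfin : T.Finite := (hSfin.image _).insert _
  have hTfin' : Finite T := hTfin
  set M := IntermediateField.adjoin K {b : AlgebraicClosure K | ∃ n ∈ T, n ≠ 0 ∧ b ^ n = 1} with hM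
  have hcyc : IsCyclotomicExtension T K M := by
    apply IntermediateField.isCyclotomicExtension_adjoin_of_exists_isPrimitiveRoot
    rintro n (rfl | ⟨x, hx, rfl⟩) hn
    · exact ⟨ζ, hζ⟩
    · exact ⟨x, IsPrimitiveRoot.orderOf _⟩
  have hab : IsAbelianGalois K M := IsCyclotomicExtension.isAbelianGalois T K M
  have hMfin : FiniteDimensional K M := IsCyclotomicExtension.finiteDimensional T K M
  have hζM : ζ ∈ M := IntermediateField.subset_adjoin _ _
    ⟨ℓ, Set.mem_insert _ _, hℓ.ne_zero, hζ.pow_eq_one⟩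
  set L := IntermediateField.adjoin K
    (Units.val '' ((Subgroup.closure S : Subgroup (AlgebraicClosure K)ˣ) :
      Set (AlgebraicClosure K)ˣ)) with hL
  have hWM : Subgroup.closure S ≤ unitsIn M := by
    rw [Subgroup.closure_le]
    intro x hx
    obtain ⟨q, hq, -, -, -, hxq⟩ := hS x hx
    refine IntermediateField.subset_adjoin _ _
      ⟨q, Set.mem_insert_of_mem _ ⟨x, hx, hxq.eq_orderOf.symm⟩, hq.ne_zero, hxq.pow_eq_one⟩
  have hLM : L ≤ M := by
    rw [hL, IntermediateField.adjoin_le_iff]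
    rintro _ ⟨x, hx, rfl⟩
    exact hWM hx
  have hbase : ∀ F : IntermediateField K (AlgebraicClosure K), baseUnits K ≤ unitsIn F := by
    rintro F _ ⟨u, rfl⟩
    exact F.algebraMap_mem u
  -- the key intersection
  have hkey : unitsIn M ⊓ Γℓ ≤ baseUnits K := by
    rintro x ⟨hxM, hxΓ⟩
    by_contra hxK
    obtain ⟨k, h1, h2⟩ := aux_choose hxK (hm ▸ aux_pow_mem hxΓ)
    have hzΓ : x ^ ℓ ^ k ∈ Γℓ := pow_mem hxΓ _
    have hzM : x ^ ℓ ^ k ∈ unitsIn M := pow_mem hxM _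
    generalize x ^ ℓ ^ k = z at h1 h2 hzΓ hzM
    obtain ⟨u, hu⟩ := h2
    have hu' : algebraMap K (AlgebraicClosure K) u = (z : AlgebraicClosure K) ^ ℓ := by
      have := congrArg Units.val hu
      simpa using this
    obtain ⟨b, hb⟩ := abelian_root hℓ hζ hnK M hzM hu'
    have hb0 : b ≠ 0 := by
      rintro rfl
      rw [zero_pow hℓ.ne_zero] at hb
      exact u.ne_zero hb.symm
    set v : (AlgebraicClosure K)ˣ :=
      Units.map (algebraMap K (AlgebraicClosure K)).toMonoidHom (Units.mk0 b hb0) with hv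
    have hvK : v ∈ baseUnits K := ⟨_, rfl⟩
    have hpow : (z * v⁻¹) ^ ℓ = 1 := by
      rw [mul_pow, inv_pow, mul_inv_eq_one]
      apply Units.ext
      rw [Units.val_pow_eq_pow_val, ← hu', ← hb, Units.val_pow_eq_pow_val, map_pow]
      rfl
    have hne : z * v⁻¹ ≠ 1 := by
      intro h
      rw [mul_inv_eq_one] at h
      exact h1 (h ▸ hvK)
    have := Fact.mk hℓ
    have hprim : IsPrimitiveRoot (z * v⁻¹) ℓ := by
      rw [← orderOf_eq_prime hpow hne]; exact IsPrimitiveRoot.orderOf _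
    refine hnΓ (z * v⁻¹) (IsPrimitiveRoot.coe_units_iff.2 hprim) ?_
    exact (le_sup_right : Γℓ ≤ _) (mul_mem hzΓ (inv_mem (hΓK hvK)))
  have hind : ∀ F : IntermediateField K (AlgebraicClosure K), F ≤ M →
      (unitsIn F).relIndex Γℓ = ℓ ^ m := by
    intro F hF
    rw [← hm, ← Subgroup.inf_relIndex_right (unitsIn F)]
    congr 1
    exact le_antisymm ((inf_le_inf_right _ (unitsIn_mono hF)).trans hkey)
      (le_inf (hbase F) hΓK)
  have hup := (upper hℓ Γℓ m L (hind L hLM)).2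
  have hex := exact_deg hℓ hodd Γℓ hζ m M hζM (hind M le_rfl)
  have hLMpos : 0 < L.relfinrank M := by
    have h := IntermediateField.finrank_bot_mul_relfinrank hLM
    rcases Nat.eq_zero_or_pos (L.relfinrank M) with h0 | h0
    · rw [h0, mul_zero] at h
      exact absurd h.symm (Module.finrank_pos (R := K) (M := M)).ne'
    · exact h0
  have hlow := relfinrank_sup_le L (fieldGen L Γℓ) M le_sup_left hLM hLMpos
  have hsup : M ⊔ fieldGen L Γℓ = fieldGen M Γℓ := by
    unfold fieldGen
    rw [← sup_assoc, sup_eq_left.2 hLM]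
  rw [hsup, hex] at hlow
  have hfield : IntermediateField.adjoin K
      (Units.val '' ((baseUnits K ⊔ Subgroup.closure S ⊔ Γℓ) : Set (AlgebraicClosure K)ˣ)) = fieldGen L Γℓ := by
    apply le_antisymm
    · have hle : baseUnits K ⊔ Subgroup.closure S ⊔ Γℓ ≤ unitsIn (fieldGen L Γℓ) := by
        refine sup_le (sup_le (hbase _) ?_) ?_
        · intro x hx
          exact (le_sup_left : L ≤ fieldGen L Γℓ) (IntermediateField.subset_adjoin _ _ ⟨x, hx, rfl⟩)
        · intro x hx
          exact (le_sup_right : _ ≤ fieldGen L Γℓ) (IntermediateField.subset_adjoin _ _ ⟨x, hx, rfl⟩)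
      rw [IntermediateField.adjoin_le_iff]
      rintro _ ⟨x, hx, rfl⟩
      refine hle ?_
      rcases hx with (hx | hx) | hx
      · exact (le_sup_left.trans' le_sup_left : baseUnits K ≤ _) hx
      · exact (le_sup_left.trans' le_sup_right : Subgroup.closure S ≤ _) hx
      · exact (le_sup_right : Γℓ ≤ _) hx
    · refine sup_le (IntermediateField.adjoin.mono _ _ _ (Set.image_mono ?_))
        (IntermediateField.adjoin.mono _ _ _ (Set.image_mono ?_))
      · exact fun x hx => Or.inl (Or.inr hx)
      · exact fun x hx => Or.inr hx
  have hfin := IntermediateField.finrank_bot_mul_relfinrank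
    (show L ≤ fieldGen L Γℓ from le_sup_left)
  rw [hfield, ← hfin,
    le_antisymm hup hlow, hm, mul_comm]

end
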